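/- For every n ≥ 1, the inclusion Glob^top(S^{n-1}) ↪ Glob^top(D^n) is a closed cofibration: writing G_D = Glob^top(D^n) and G_S = q(S^{n-1} × [0,1]) ⊆ G_D (the image of the boundary sphere, a closed subspace homeomorphic to Glob^top(S^{n-1})), the subspace (G_D × {0}) ∪ (G_S × [0,1]) is a retract of G_D × [0,1], i.e., there is a continuous map r : G_D × [0,1] → (G_D × {0}) ∪ (G_S × [0,1]) restricting to the identity on (G_D × {0}) ∪ (G_S × [0,1]). -/

import Mathlib

/-- The smallest equivalence relation on `Z × [0,1]` identifying `(z,0)` with `(z',0)`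
and `(z,1)` with `(z',1)` for all `z, z'`. -/
def globSetoid (Z : Type) [TopologicalSpace Z] : Setoid (Z × unitInterval) where
  r a b := a = b ∨ (a.2 = 0 ∧ b.2 = 0) ∨ (a.2 = 1 ∧ b.2 = 1)
  iseqv := by
    constructor
    · exact fun a => Or.inl rfl
    · rintro a b (rfl | ⟨h1, h2⟩ | ⟨h1, h2⟩)
      · exact Or.inl rfl
      · exact Or.inr (Or.inl ⟨h2, h1⟩)
      · exact Or.inr (Or.inr ⟨h2, h1⟩)
    · rintro a b c (rfl | ⟨h1, h2⟩ | ⟨h1, h2⟩) (rfl | ⟨h3, h4⟩ | ⟨h3, h4⟩) <;>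
        simp_all

/-- The globe `Glob^top(Z)`: the quotient of `Z × [0,1]` collapsing `Z × {0}` to a point
and `Z × {1}` to a point. -/
def GlobTop (Z : Type) [TopologicalSpace Z] : Type := Quotient (globSetoid Z)

/-- The quotient map `q : Z × [0,1] → Glob^top(Z)`. -/
def globQ (Z : Type) [TopologicalSpace Z] : Z × unitInterval → GlobTop Z :=
  Quotient.mk (globSetoid Z)

/-- `Glob^top(Z)` carries the quotient topology. -/
instance (Z : Type) [TopologicalSpace Z] : TopologicalSpace (GlobTop Z) :=
  TopologicalSpace.coinduced (globQ Z) inferInstance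

/-- The bottom point `⊥` of `Glob^top(Z)`, the common class of the points `(z,0)`. -/
noncomputable def globBot (Z : Type) [TopologicalSpace Z] [Nonempty Z] : GlobTop Z :=
  globQ Z (Classical.arbitrary Z, 0)

/-- The top point `⊤` of `Glob^top(Z)`, the common class of the points `(z,1)`. -/
noncomputable def globTop (Z : Type) [TopologicalSpace Z] [Nonempty Z] : GlobTop Z :=
  globQ Z (Classical.arbitrary Z, 1)

/-- The closed unit disk `D^n ⊆ ℝ^n`. -/
abbrev disk (n : ℕ) : Set (EuclideanSpace ℝ (Fin n)) := Metric.closedBall 0 1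

/-- `G_D = Glob^top(D^n)`. -/
abbrev GD (n : ℕ) : Type := GlobTop ↥(disk n)

/-- `G_S = q(S^{n-1} × [0,1]) ⊆ G_D`, the image of the boundary sphere part,
a closed subspace homeomorphic to `Glob^top(S^{n-1})`. -/
def GS (n : ℕ) : Set (GD n) :=
  {x | ∃ (z : ↥(disk n)) (t : unitInterval),
    (z : EuclideanSpace ℝ (Fin n)) ∈ Metric.sphere (0 : EuclideanSpace ℝ (Fin n)) 1 ∧
    x = globQ ↥(disk n) (z, t)}

/-- The subspace `(G_D × {0}) ∪ (G_S × [0,1])` of `G_D × [0,1]`. -/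
def mushroom (n : ℕ) : Set (GD n × unitInterval) :=
  {p | p.2 = 0 ∨ p.1 ∈ GS n}

/-- the rescaling factor of the radial retraction -/
noncomputable def gM {n : ℕ} (x : (↥(disk n) × unitInterval) × unitInterval) : ℝ :=
  max (max ‖(x.1.1 : EuclideanSpace ℝ (Fin n))‖ |2 * (x.1.2 : ℝ) - 1|) (1 - (x.2 : ℝ) / 2)

theorem gM_cont {n : ℕ} : Continuous (gM (n := n)) := by
  unfold gM; fun_prop

theorem gM_pos {n : ℕ} (x : (↥(disk n) × unitInterval) × unitInterval) : 0 < gM x := by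
  have := x.2.2.2
  exact lt_of_lt_of_le (by linarith) (le_max_right _ _)

theorem gM_norm {n : ℕ} (x : (↥(disk n) × unitInterval) × unitInterval) :
    ‖(x.1.1 : EuclideanSpace ℝ (Fin n))‖ ≤ gM x :=
  (le_max_left _ _).trans (le_max_left _ _)

theorem gM_abs {n : ℕ} (x : (↥(disk n) × unitInterval) × unitInterval) :
    |2 * (x.1.2 : ℝ) - 1| ≤ gM x :=
  (le_max_right _ _).trans (le_max_left _ _)

theorem gM_half {n : ℕ} (x : (↥(disk n) × unitInterval) × unitInterval) :
    1 - (x.2 : ℝ) / 2 ≤ gM x := le_max_right _ _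

theorem disk_norm {n : ℕ} (z : ↥(disk n)) : ‖(z : EuclideanSpace ℝ (Fin n))‖ ≤ 1 := by
  exact mem_closedBall_zero_iff.1 z.2

theorem gM_le {n : ℕ} (x : (↥(disk n) × unitInterval) × unitInterval) : gM x ≤ 1 := by
  have h1 := x.1.2.2.1
  have h2 := x.1.2.2.2
  have h3 := x.2.2.1
  refine max_le (max_le (disk_norm _) (abs_le.2 ⟨by linarith, by linarith⟩)) (by linarith)

/-- the radial retraction of `D × I × I` -/
noncomputable def gR {n : ℕ} (x : (↥(disk n) × unitInterval) × unitInterval) :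
    (↥(disk n) × unitInterval) × unitInterval :=
  ((⟨(gM x)⁻¹ • (x.1.1 : EuclideanSpace ℝ (Fin n)), by
      have h := gM_norm x
      have h0 := gM_pos x
      rw [mem_closedBall_zero_iff, norm_smul, norm_inv, Real.norm_of_nonneg h0.le,
        inv_mul_le_iff₀ h0]
      simpa using h⟩,
    ⟨(1 + (2 * (x.1.2 : ℝ) - 1) / gM x) / 2, by
      have h := abs_le.1 (gM_abs x)
      have h0 := gM_pos x
      have h1 : (2 * (x.1.2 : ℝ) - 1) / gM x ≤ 1 := by rw [div_le_iff₀ h0]; linarith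
      have h2 : -1 ≤ (2 * (x.1.2 : ℝ) - 1) / gM x := by rw [le_div_iff₀ h0]; linarith
      constructor <;> linarith⟩),
    ⟨2 - (2 - (x.2 : ℝ)) / gM x, by
      have h := gM_half x
      have h0 := gM_pos x
      have h3 := gM_le x
      have h4 := x.2.2.2
      have h1 : (2 - (x.2 : ℝ)) / gM x ≤ 2 := by rw [div_le_iff₀ h0]; linarith
      have h2 : 1 ≤ (2 - (x.2 : ℝ)) / gM x := by rw [le_div_iff₀ h0]; linarith
      constructor <;> linarith⟩)

theorem gR_cont {n : ℕ} : Continuous (gR (n := n)) := by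
  have h := gM_cont (n := n)
  have h0 := fun x => (gM_pos (n := n) x).ne'
  unfold gR
  refine ((Continuous.subtype_mk ?_ _).prodMk (Continuous.subtype_mk ?_ _)).prodMk
    (Continuous.subtype_mk ?_ _)
  · exact (h.inv₀ h0).smul (by fun_prop)
  · exact (continuous_const.add ((by fun_prop : Continuous _).div h h0)).div_const _
  · exact continuous_const.sub ((by fun_prop : Continuous _).div h h0)

theorem gR_fix {n : ℕ} (x : (↥(disk n) × unitInterval) × unitInterval) (h : gM x = 1) :
    gR x = x := by
  obtain ⟨⟨z, t⟩, s⟩ := x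
  refine Prod.ext (Prod.ext (Subtype.ext ?_) (Subtype.ext ?_)) (Subtype.ext ?_) <;>
    simp [gR, h]

theorem gM_eq_one {n : ℕ} (x : (↥(disk n) × unitInterval) × unitInterval)
    (h : ‖(x.1.1 : EuclideanSpace ℝ (Fin n))‖ = 1 ∨ x.1.2 = 0 ∨ x.1.2 = 1 ∨ x.2 = 0) :
    gM x = 1 := by
  refine le_antisymm (gM_le x) ?_
  have h1 := gM_norm x
  have h2 := gM_abs x
  have h3 := gM_half x
  rcases h with h | h | h | h
  · rwa [h] at h1
  · rw [h] at h2; simpa using h2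
  · rw [h] at h2; norm_num at h2; exact h2
  · rw [h] at h3; simpa using h3

theorem gR_mem {n : ℕ} (x : (↥(disk n) × unitInterval) × unitInterval) :
    ‖((gR x).1.1 : EuclideanSpace ℝ (Fin n))‖ = 1 ∨ (gR x).1.2 = 0 ∨ (gR x).1.2 = 1 ∨
      (gR x).2 = 0 := by
  have h0 := gM_pos x
  rcases max_choice (max ‖(x.1.1 : EuclideanSpace ℝ (Fin n))‖ |2 * (x.1.2 : ℝ) - 1|)
    (1 - (x.2 : ℝ) / 2) with h | h
  · rcases max_choice ‖(x.1.1 : EuclideanSpace ℝ (Fin n))‖ |2 * (x.1.2 : ℝ) - 1| with h' | h'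
    · left
      have e : gM x = ‖(x.1.1 : EuclideanSpace ℝ (Fin n))‖ := h.trans h'
      simp only [gR]
      rw [norm_smul, norm_inv, Real.norm_of_nonneg h0.le, ← e, inv_mul_cancel₀ h0.ne']
    · have e : gM x = |2 * (x.1.2 : ℝ) - 1| := h.trans h'
      right
      rcases abs_choice (2 * (x.1.2 : ℝ) - 1) with h2 | h2
      · right; left
        apply Subtype.ext
        have : 2 * (x.1.2 : ℝ) - 1 = gM x := by rw [e, h2]
        simp only [gR]
        rw [this, div_self h0.ne']; norm_num
      · left
        apply Subtype.ext
        have : 2 * (x.1.2 : ℝ) - 1 = - gM x := by rw [e, h2]; ring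
        simp only [gR]
        rw [this, neg_div, div_self h0.ne']; norm_num
  · right; right; right
    have e : gM x = 1 - (x.2 : ℝ) / 2 := h
    apply Subtype.ext
    have : 2 - (x.2 : ℝ) = 2 * gM x := by rw [e]; ring
    simp only [gR]
    rw [this, mul_div_assoc, div_self h0.ne']; norm_num

theorem globQ_quot (Z : Type) [TopologicalSpace Z] : Topology.IsQuotientMap (globQ Z) :=
  ⟨⟨rfl⟩, Quotient.mk_surjective⟩

theorem globQ_eq {Z : Type} [TopologicalSpace Z] {a b : Z × unitInterval}
    (h : a = b ∨ (a.2 = 0 ∧ b.2 = 0) ∨ (a.2 = 1 ∧ b.2 = 1)) : globQ Z a = globQ Z b :=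
  Quotient.sound (s := globSetoid Z) h

theorem globQ_exact {Z : Type} [TopologicalSpace Z] {a b : Z × unitInterval}
    (h : globQ Z a = globQ Z b) : a = b ∨ (a.2 = 0 ∧ b.2 = 0) ∨ (a.2 = 1 ∧ b.2 = 1) :=
  Quotient.exact (s := globSetoid Z) h

/-- the retraction on the quotient -/
noncomputable def gr (n : ℕ) (p : GD n × unitInterval) : GD n × unitInterval :=
  Quotient.lift (s := globSetoid ↥(disk n))
    (fun a => (globQ ↥(disk n) (gR (a, p.2)).1, (gR (a, p.2)).2)) (by
      rintro a b (rfl | ⟨h1, h2⟩ | ⟨h1, h2⟩)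
      · rfl
      · rw [gR_fix (a, p.2) (gM_eq_one _ (by simp [h1])),
          gR_fix (b, p.2) (gM_eq_one _ (by simp [h2]))]
        exact Prod.ext (globQ_eq (Or.inr (Or.inl ⟨h1, h2⟩))) rfl
      · rw [gR_fix (a, p.2) (gM_eq_one _ (by simp [h1])),
          gR_fix (b, p.2) (gM_eq_one _ (by simp [h2]))]
        exact Prod.ext (globQ_eq (Or.inr (Or.inr ⟨h1, h2⟩))) rfl) p.1

theorem gr_mk (n : ℕ) (a : ↥(disk n) × unitInterval) (s : unitInterval) :
    gr n (globQ _ a, s) = (globQ ↥(disk n) (gR (a, s)).1, (gR (a, s)).2) := rfl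

/-- for every `n ≥ 1`, the inclusion `Glob^top(S^{n-1}) ↪ Glob^top(D^n)` is a
closed cofibration: `(G_D × {0}) ∪ (G_S × [0,1])` is a retract of `G_D × [0,1]`. -/
theorem glob_sphere_disk_cofibration (n : ℕ) (hn : 1 ≤ n) :
    ∃ r : GD n × unitInterval → GD n × unitInterval,
      Continuous r ∧ (∀ p, r p ∈ mushroom n) ∧ (∀ p ∈ mushroom n, r p = p) := by
  refine ⟨gr n, ?_, ?_, ?_⟩
  · refine (globQ_quot ↥(disk n)).continuous_lift_prod_left ?_
    have h := gR_cont (n := n)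
    exact ((globQ_quot ↥(disk n)).continuous.comp (continuous_fst.comp h)).prodMk
      (continuous_snd.comp h)
  · rintro ⟨y, s⟩
    obtain ⟨a, rfl⟩ := (globQ_quot ↥(disk n)).surjective y
    rw [gr_mk]
    have hm : ‖EuclideanSpace.single (⟨0, hn⟩ : Fin n) (1 : ℝ)‖ = 1 := by simp
    let e : ↥(disk n) := ⟨EuclideanSpace.single (⟨0, hn⟩ : Fin n) (1 : ℝ), by
      rw [mem_closedBall_zero_iff, hm]⟩
    rcases gR_mem (a, s) with h | h | h | h
    · exact Or.inr ⟨_, _, by rw [mem_sphere_zero_iff_norm]; exact h, rfl⟩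
    · exact Or.inr ⟨e, 0, by rw [mem_sphere_zero_iff_norm]; exact hm,
        globQ_eq (Or.inr (Or.inl ⟨h, rfl⟩))⟩
    · exact Or.inr ⟨e, 1, by rw [mem_sphere_zero_iff_norm]; exact hm,
        globQ_eq (Or.inr (Or.inr ⟨h, rfl⟩))⟩
    · exact Or.inl h
  · rintro ⟨y, s⟩ (h | ⟨z, t, hz, h⟩)
    · obtain ⟨a, rfl⟩ := (globQ_quot ↥(disk n)).surjective y
      rw [gr_mk, gR_fix _ (gM_eq_one _ (Or.inr (Or.inr (Or.inr h))))]
    · dsimp only at h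
      subst h
      rw [gr_mk, gR_fix _ (gM_eq_one _ (Or.inl (by simpa using hz)))]
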